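/- arXiv:2303.02557 — 8 statements merged into one kernel-verified Lean document; each statement's English description precedes it below -/
import Mathlib

section
/- Let Q be the optimal Q-function for reward r, and let f : ℝ → ℝ satisfy: (1) f is convex; (2i) f(x+y) ≤ f(x) + f(y) for all x, y; (2ii) f(γx) ≤ γ·f(x) for all x. Define V_f(s) = max_{a∈A} f(Q(s,a)) and r_C(s,a) = f(r(s,a)) + γ·∑_{s'} p(s'|s,a)·V_f(s') − f(Q(s,a)), and let C be the optimal Q-function for reward r_C. If Q̃ is the optimal Q-function for the transformed reward (s,a) ↦ f(r(s,a)), then for all (s,a): f(Q(s,a)) ≤ Q̃(s,a) ≤ f(Q(s,a)) + C(s,a). -/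
/-!
The Bellman optimality operator `T_ρ U (s,a) = ρ(s,a) + γ ∑ p(s'|s,a) max U(s',·)` obeys a comparison
principle: if `U ≤ T_ρ U` and `W ≥ T_ρ W` then `U ≤ W` (`bellman_comparison`). With `ρ = f ∘ r`,
the function `Q̃` is a fixed point. Subadditivity, `f (γx) ≤ γ f x`, Jensen's inequality and
`f (max Q) ≤ max f(Q)` make `f ∘ Q` a subsolution, which gives the lower bound. The reward `r_C` is
such that `f ∘ Q + C = f ∘ r + γ ∑ p (max f(Q) + max C)`, and since the maximum of a sum is at most
the sum of the maxima, `f ∘ Q + C` is a supersolution, which gives the upper bound.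
-/

open Finset

/-- Maximum of a real-valued function over a nonempty finite action set. -/
noncomputable def amax {A : Type*} [Fintype A] [Nonempty A] (g : A → ℝ) : ℝ :=
  Finset.univ.sup' Finset.univ_nonempty g

section

variable {A : Type*} [Fintype A] [Nonempty A]

theorem le_amax (g : A → ℝ) (a : A) : g a ≤ amax g :=
  Finset.le_sup' g (Finset.mem_univ a)

theorem amax_le {g : A → ℝ} {c : ℝ} (h : ∀ a, g a ≤ c) : amax g ≤ c :=
  Finset.sup'_le _ _ fun a _ => h a

theorem exists_amax_eq (g : A → ℝ) : ∃ a, amax g = g a := by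
  obtain ⟨a, -, ha⟩ := Finset.exists_mem_eq_sup' (Finset.univ_nonempty (α := A)) g
  exact ⟨a, ha⟩

end

/-- Comparison principle for the Bellman optimality operator: a subsolution lies below a
supersolution. At a maximizer of `U - W`, with value `δ`, the two inequalities give `δ ≤ γ δ`. -/
theorem bellman_comparison
    {S A : Type*} [Fintype S] [Fintype A] [Nonempty S] [Nonempty A]
    (p : S → A → S → ℝ)
    (hp_nonneg : ∀ s a s', 0 ≤ p s a s')
    (hp_sum : ∀ s a, ∑ s', p s a s' = 1)
    (γ : ℝ) (hγ0 : 0 < γ) (hγ1 : γ < 1)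
    (ρ U W : S → A → ℝ)
    (hU : ∀ s a, U s a ≤ ρ s a + γ * ∑ s', p s a s' * amax (fun a' => U s' a'))
    (hW : ∀ s a, ρ s a + γ * ∑ s', p s a s' * amax (fun a' => W s' a') ≤ W s a) :
    ∀ s a, U s a ≤ W s a := by
  obtain ⟨⟨s₀, a₀⟩, hmax⟩ := Finite.exists_max (fun x : S × A => U x.1 x.2 - W x.1 x.2)
  set δ := U s₀ a₀ - W s₀ a₀ with hδ
  have hle : ∀ s a, U s a ≤ W s a + δ := fun s a => by
    have := hmax (s, a)
    dsimp only at this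
    linarith
  have hV : ∀ s, amax (fun a' => U s a') ≤ amax (fun a' => W s a') + δ := fun s =>
    amax_le fun a => (hle s a).trans (by have := le_amax (fun a' => W s a') a; linarith)
  have hsum : ∑ s', p s₀ a₀ s' * amax (fun a' => U s' a')
      ≤ ∑ s', p s₀ a₀ s' * amax (fun a' => W s' a') + δ := by
    calc _ ≤ ∑ s', p s₀ a₀ s' * (amax (fun a' => W s' a') + δ) :=
          Finset.sum_le_sum fun s' _ => mul_le_mul_of_nonneg_left (hV s') (hp_nonneg _ _ _)
      _ = _ := by
          simp only [mul_add, Finset.sum_add_distrib, ← Finset.sum_mul, hp_sum, one_mul]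
  have hδ0 : δ ≤ 0 := by
    have h1 := hU s₀ a₀
    have h2 := hW s₀ a₀
    have h3 := mul_le_mul_of_nonneg_left hsum hγ0.le
    rw [mul_add] at h3
    have h4 : δ ≤ γ * δ := by linarith
    nlinarith
  intro s a
  linarith [hle s a]

/-- **Convex conditions, standard RL (Lemma 4.1).** -/
theorem convex_conditions_standard_rl
    {S A : Type*} [Fintype S] [Fintype A] [Nonempty S] [Nonempty A]
    (p : S → A → S → ℝ)
    (hp_nonneg : ∀ s a s', 0 ≤ p s a s')
    (hp_sum : ∀ s a, ∑ s', p s a s' = 1)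
    (γ : ℝ) (hγ0 : 0 < γ) (hγ1 : γ < 1)
    (r : S → A → ℝ)
    -- Q is the optimal Q-function for reward r
    (Q : S → A → ℝ)
    (hQ : ∀ s a, Q s a = r s a + γ * ∑ s', p s a s' * amax (fun a' => Q s' a'))
    -- the transformation function f and its conditions
    (f : ℝ → ℝ)
    (hf_convex : ConvexOn ℝ Set.univ f)
    (hf_subadd : ∀ x y, f (x + y) ≤ f x + f y)
    (hf_subhom : ∀ x, f (γ * x) ≤ γ * f x)
    -- V_f, the auxiliary reward r_C, and C the optimal Q-function for r_C
    (Vf : S → ℝ)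
    (hVf : ∀ s, Vf s = amax (fun a => f (Q s a)))
    (rC : S → A → ℝ)
    (hrC : ∀ s a, rC s a = f (r s a) + γ * (∑ s', p s a s' * Vf s') - f (Q s a))
    (C : S → A → ℝ)
    (hC : ∀ s a, C s a = rC s a + γ * ∑ s', p s a s' * amax (fun a' => C s' a'))
    -- Q̃ is the optimal Q-function for the transformed reward f ∘ r
    (Qt : S → A → ℝ)
    (hQt : ∀ s a, Qt s a = f (r s a) + γ * ∑ s', p s a s' * amax (fun a' => Qt s' a')) :
    ∀ s a, f (Q s a) ≤ Qt s a ∧ Qt s a ≤ f (Q s a) + C s a := by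
  have hfV : ∀ s, f (amax (fun a' => Q s a')) ≤ amax (fun a => f (Q s a)) := fun s => by
    obtain ⟨a, ha⟩ := exists_amax_eq (fun a' => Q s a')
    rw [ha]
    exact le_amax (fun a => f (Q s a)) a
  have hsub : ∀ s a, f (Q s a)
      ≤ f (r s a) + γ * ∑ s', p s a s' * amax (fun a' => f (Q s' a')) := fun s a => by
    have hJensen : f (∑ s', p s a s' * amax (fun a' => Q s' a'))
        ≤ ∑ s', p s a s' * f (amax (fun a' => Q s' a')) := by
      simpa only [smul_eq_mul] using
        hf_convex.map_sum_le (t := Finset.univ) (w := p s a)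
          (p := fun s' => amax (fun a' => Q s' a'))
          (fun s' _ => hp_nonneg s a s') (hp_sum s a) (fun _ _ => Set.mem_univ _)
    have hmono : ∑ s', p s a s' * f (amax (fun a' => Q s' a'))
        ≤ ∑ s', p s a s' * amax (fun a' => f (Q s' a')) :=
      Finset.sum_le_sum fun s' _ => mul_le_mul_of_nonneg_left (hfV s') (hp_nonneg _ _ _)
    calc f (Q s a) = f (r s a + γ * ∑ s', p s a s' * amax (fun a' => Q s' a')) := by rw [← hQ]
      _ ≤ f (r s a) + f (γ * ∑ s', p s a s' * amax (fun a' => Q s' a')) := hf_subadd _ _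
      _ ≤ f (r s a) + γ * f (∑ s', p s a s' * amax (fun a' => Q s' a')) := by
          gcongr
          exact hf_subhom _
      _ ≤ _ := by
          gcongr
          exact hJensen.trans hmono
  have hsuper : ∀ s a, f (r s a) + γ * ∑ s', p s a s' * amax (fun a' => f (Q s' a') + C s' a')
      ≤ f (Q s a) + C s a := fun s a => by
    have hV : ∀ s', amax (fun a' => f (Q s' a') + C s' a')
        ≤ Vf s' + amax (fun a' => C s' a') := fun s' => by
      rw [hVf]
      exact amax_le fun a' =>
        add_le_add (le_amax (fun a => f (Q s' a)) a') (le_amax (fun a => C s' a) a')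
    have hsum : ∑ s', p s a s' * amax (fun a' => f (Q s' a') + C s' a')
        ≤ ∑ s', p s a s' * Vf s' + ∑ s', p s a s' * amax (fun a' => C s' a') := by
      rw [← Finset.sum_add_distrib]
      refine Finset.sum_le_sum fun s' _ => ?_
      rw [← mul_add]
      exact mul_le_mul_of_nonneg_left (hV s') (hp_nonneg _ _ _)
    have h := mul_le_mul_of_nonneg_left hsum hγ0.le
    rw [mul_add] at h
    rw [hC s a, hrC s a]
    linarith
  intro s a
  exact ⟨bellman_comparison p hp_nonneg hp_sum γ hγ0 hγ1 (fun s a => f (r s a))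
      (fun s a => f (Q s a)) Qt hsub (fun s a => (hQt s a).ge) s a,
    bellman_comparison p hp_nonneg hp_sum γ hγ0 hγ1 (fun s a => f (r s a))
      Qt (fun s a => f (Q s a) + C s a) (fun s a => (hQt s a).le) hsuper s a⟩
end

section
/- Let Q be the optimal soft Q-function for reward r, and let f : ℝ → ℝ satisfy: (1) f is convex; (2i) f(x+y) ≤ f(x) + f(y) for all x, y; (2ii) f(γx) ≤ γ·f(x) for all x; (3) f(log ∑_{a} π₀(a|s)·exp 𝒬(s,a)) ≤ log ∑_{a} π₀(a|s)·exp f(𝒬(s,a)) for every function 𝒬 : S × A → ℝ and every s ∈ S. Define V_f(s) = log ∑_{a} π₀(a|s)·exp f(Q(s,a)) and r_C(s,a) = f(r(s,a)) + γ·∑_{s'} p(s'|s,a)·V_f(s') − f(Q(s,a)), and let C be the function satisfying C(s,a) = r_C(s,a) + γ·∑_{s'} p(s'|s,a)·max_{a'∈A} C(s',a'). If Q̃ is the optimal soft Q-function for the transformed reward (s,a) ↦ f(r(s,a)), then for all (s,a): f(Q(s,a)) ≤ Q̃(s,a) ≤ f(Q(s,a)) + C(s,a). -/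
/-!
Both bounds are comparison principles for `γ`-contractive Bellman operators. The log-sum-exp value
`softV` is monotone and commutes with adding constants (`softV_le_add`). Hence, if the violation
`D` of either bound is at most `M` everywhere, one Bellman backup shows that it is at most `γ * M`
everywhere; evaluating at a maximizer of `D` gives `max D ≤ γ * max D`, so `max D ≤ 0`
(`nonpos_of_contract`).

For the lower bound, `D = f ∘ Q - Qt`: subadditivity, subhomogeneity, Jensen's inequality and the
log-sum-exp condition make `f ∘ Q` a subsolution of the Bellman equation for `f ∘ r`
(`hsub` below). For the upper bound, `D = Qt - (f ∘ Q + C)`: the equation for `C` says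
exactly that `f ∘ Q + C` is `f ∘ r` plus the discounted mean of `Vf + max C`, and
`softV (f ∘ Q + C) ≤ Vf + max C`.
-/

open Finset

/-- The soft (log-sum-exp) value of `g` under the prior action distribution `π0`. -/
noncomputable def softV {A : Type*} [Fintype A] (π0 : A → ℝ) (g : A → ℝ) : ℝ :=
  Real.log (∑ a, π0 a * Real.exp (g a))

/-- Monotonicity of `softV` combined with its equivariance under adding a constant. -/
lemma softV_le_add {A : Type*} [Fintype A] [Nonempty A] {w g h : A → ℝ} {c : ℝ}
    (hw : ∀ a, 0 < w a) (hgh : ∀ a, g a ≤ h a + c) : softV w g ≤ softV w h + c := by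
  have pos : ∀ k : A → ℝ, 0 < ∑ a, w a * Real.exp (k a) := fun k =>
    Finset.sum_pos (fun a _ => mul_pos (hw a) (Real.exp_pos _)) Finset.univ_nonempty
  unfold softV
  rw [← Real.log_exp c, ← Real.log_mul (pos h).ne' (Real.exp_pos _).ne']
  apply Real.log_le_log (pos g)
  rw [Finset.sum_mul]
  refine Finset.sum_le_sum fun a _ => ?_
  rw [mul_assoc, ← Real.exp_add]
  exact mul_le_mul_of_nonneg_left (Real.exp_le_exp.2 (hgh a)) (hw a).le

lemma sum_le_sum_add_const {S : Type*} [Fintype S] {q u v : S → ℝ} {c : ℝ}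
    (hq : ∀ s, 0 ≤ q s) (hq1 : ∑ s, q s = 1) (huv : ∀ s, u s ≤ v s + c) :
    ∑ s, q s * u s ≤ ∑ s, q s * v s + c := by
  calc ∑ s, q s * u s ≤ ∑ s, q s * (v s + c) :=
        Finset.sum_le_sum fun s _ => mul_le_mul_of_nonneg_left (huv s) (hq s)
    _ = ∑ s, q s * v s + c := by
        simp only [mul_add, Finset.sum_add_distrib, ← Finset.sum_mul, hq1, one_mul]

/-- A function on a finite set whose every upper bound `M` improves to `γ * M` is nonpositive. -/
lemma nonpos_of_contract {S A : Type*} [Finite S] [Finite A] [Nonempty S] [Nonempty A]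
    {γ : ℝ} (hγ1 : γ < 1) (D : S → A → ℝ)
    (hD : ∀ M, (∀ s a, D s a ≤ M) → ∀ s a, D s a ≤ γ * M) : ∀ s a, D s a ≤ 0 := by
  obtain ⟨x, hx⟩ := Finite.exists_max (fun x : S × A => D x.1 x.2)
  have h1 := hD (D x.1 x.2) (fun s a => hx (s, a)) x.1 x.2
  have h2 : D x.1 x.2 ≤ 0 := by nlinarith
  exact fun s a => (hx (s, a)).trans h2

/-- **Convex conditions, entropy-regularized RL (Lemma 5.1).** -/
theorem convex_conditions_entreg_rl
    {S A : Type*} [Fintype S] [Fintype A] [Nonempty S] [Nonempty A]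
    (p : S → A → S → ℝ)
    (hp_nonneg : ∀ s a s', 0 ≤ p s a s')
    (hp_sum : ∀ s a, ∑ s', p s a s' = 1)
    (γ : ℝ) (hγ0 : 0 < γ) (hγ1 : γ < 1)
    -- prior policy
    (π0 : S → A → ℝ)
    (hπ0_pos : ∀ s a, 0 < π0 s a)
    (hπ0_sum : ∀ s, ∑ a, π0 s a = 1)
    (r : S → A → ℝ)
    -- Q is the optimal soft Q-function for reward r
    (Q : S → A → ℝ)
    (hQ : ∀ s a, Q s a = r s a + γ * ∑ s', p s a s' * softV (π0 s') (fun a' => Q s' a'))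
    -- the transformation function f and its conditions
    (f : ℝ → ℝ)
    (hf_convex : ConvexOn ℝ Set.univ f)
    (hf_subadd : ∀ x y, f (x + y) ≤ f x + f y)
    (hf_subhom : ∀ x, f (γ * x) ≤ γ * f x)
    (hf_lse : ∀ (𝒬 : S → A → ℝ) (s : S),
      f (softV (π0 s) (fun a => 𝒬 s a)) ≤ softV (π0 s) (fun a => f (𝒬 s a)))
    -- V_f, the auxiliary reward r_C, and the fixed point C
    (Vf : S → ℝ)
    (hVf : ∀ s, Vf s = softV (π0 s) (fun a => f (Q s a)))
    (rC : S → A → ℝ)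
    (hrC : ∀ s a, rC s a = f (r s a) + γ * (∑ s', p s a s' * Vf s') - f (Q s a))
    (C : S → A → ℝ)
    (hC : ∀ s a, C s a = rC s a + γ * ∑ s', p s a s' * amax (fun a' => C s' a'))
    -- Q̃ is the optimal soft Q-function for the transformed reward f ∘ r
    (Qt : S → A → ℝ)
    (hQt : ∀ s a, Qt s a = f (r s a) + γ * ∑ s', p s a s' * softV (π0 s') (fun a' => Qt s' a')) :
    ∀ s a, f (Q s a) ≤ Qt s a ∧ Qt s a ≤ f (Q s a) + C s a := by
  -- `f ∘ Q` is a subsolution of the soft Bellman equation for the reward `f ∘ r`.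
  have hsub : ∀ s a, f (Q s a) ≤ f (r s a) + γ * ∑ s', p s a s' * Vf s' := by
    intro s a
    have jensen : f (∑ s', p s a s' * softV (π0 s') (fun a' => Q s' a'))
        ≤ ∑ s', p s a s' * f (softV (π0 s') (fun a' => Q s' a')) := by
      simpa only [smul_eq_mul] using hf_convex.map_sum_le (t := Finset.univ) (w := p s a)
        (p := fun s' => softV (π0 s') (fun a' => Q s' a'))
        (fun s' _ => hp_nonneg s a s') (hp_sum s a) (fun _ _ => Set.mem_univ _)
    have lse : ∑ s', p s a s' * f (softV (π0 s') (fun a' => Q s' a'))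
        ≤ ∑ s', p s a s' * Vf s' :=
      Finset.sum_le_sum fun s' _ => mul_le_mul_of_nonneg_left
        ((hf_lse Q s').trans (hVf s').ge) (hp_nonneg s a s')
    calc f (Q s a)
        = f (r s a + γ * ∑ s', p s a s' * softV (π0 s') (fun a' => Q s' a')) := by rw [← hQ]
      _ ≤ f (r s a) + γ * f (∑ s', p s a s' * softV (π0 s') (fun a' => Q s' a')) :=
          (hf_subadd _ _).trans (add_le_add_right (hf_subhom _) _)
      _ ≤ f (r s a) + γ * ∑ s', p s a s' * Vf s' :=
          add_le_add_right (mul_le_mul_of_nonneg_left (jensen.trans lse) hγ0.le) _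
  have lower : ∀ s a, f (Q s a) - Qt s a ≤ 0 := by
    refine nonpos_of_contract hγ1 _ fun M hM s a => ?_
    have h := sum_le_sum_add_const (hp_nonneg s a) (hp_sum s a)
      (u := Vf) (v := fun s' => softV (π0 s') (fun a' => Qt s' a')) (c := M) (fun s' => by
        rw [hVf]
        exact softV_le_add (hπ0_pos s') fun a' => by linarith [hM s' a'])
    have h' := mul_le_mul_of_nonneg_left h hγ0.le
    linarith [hsub s a, hQt s a]
  have upper : ∀ s a, Qt s a - (f (Q s a) + C s a) ≤ 0 := by
    refine nonpos_of_contract hγ1 _ fun M hM s a => ?_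
    have h := sum_le_sum_add_const (hp_nonneg s a) (hp_sum s a)
      (u := fun s' => softV (π0 s') (fun a' => Qt s' a'))
      (v := fun s' => Vf s' + amax (fun a' => C s' a')) (c := M) (fun s' => by
        rw [hVf, add_assoc]
        refine softV_le_add (hπ0_pos s') fun a' => ?_
        have hmax : C s' a' ≤ amax (fun a' => C s' a') :=
          Finset.le_sup' (fun a' => C s' a') (Finset.mem_univ a')
        linarith [hM s' a'])
    have h' := mul_le_mul_of_nonneg_left h hγ0.le
    simp only [mul_add, Finset.sum_add_distrib] at h'
    linarith [hQt s a, hC s a, hrC s a]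
  exact fun s a => ⟨by linarith [lower s a], by linarith [upper s a]⟩
end

section
/- Let Q be the optimal soft Q-function for reward r, let f : ℝ → ℝ satisfy: (1) f is concave; (2i) f(x+y) ≥ f(x) + f(y); (2ii) f(γx) ≥ γ·f(x); (3) f(log ∑_a π₀(a|s)·exp 𝒬(s,a)) ≥ log ∑_a π₀(a|s)·exp f(𝒬(s,a)) for every 𝒬 : S × A → ℝ and every s, and let Q̃ be the optimal soft Q-function for reward (s,a) ↦ f(r(s,a)). Define V_f(s) = log ∑_a π₀(a|s)·exp f(Q(s,a)), let Ĉ satisfy Ĉ(s,a) = f(Q(s,a)) − f(r(s,a)) − γ·∑_{s'} p(s'|s,a)·V_f(s') + γ·∑_{s'} p(s'|s,a)·max_{a'} Ĉ(s',a'), and define the policy π_f(a|s) = π₀(a|s)·exp(f(Q(s,a)) − V_f(s)). Let Q̃^{π_f} be the soft value of π_f on the transformed task, i.e. the function satisfying Q̃^{π_f}(s,a) = f(r(s,a)) + γ·∑_{s'} p(s'|s,a)·∑_{a'} π_f(a'|s')·[Q̃^{π_f}(s',a') − log(π_f(a'|s')/π₀(a'|s'))], and let D̂ satisfy D̂(s,a)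 = γ·∑_{s'} p(s'|s,a)·∑_{a'} π_f(a'|s')·(Ĉ(s',a') + D̂(s',a')). Then for all (s,a): Q̃(s,a) − Q̃^{π_f}(s,a) ≤ D̂(s,a). -/
/-!
Write `δ = f ∘ Q - f ∘ r - γ P V_f` for the Bellman residual of `f ∘ Q` on the transformed task.

* The conditions on `f` (superadditivity, `γ`-superhomogeneity, Jensen, log-sum-exp) give `0 ≤ δ`, so
  `f ∘ Q` is a supersolution of the transformed soft Bellman equation and `Q̃ ≤ f ∘ Q`.
* `f ∘ Q - Q̃ = δ + γ P (V_f - V_{Q̃})`, and `V_f - V_{Q̃} ≤ max_a (f ∘ Q - Q̃)`; comparing with the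
  equation for `Ĉ` gives `f ∘ Q - Q̃ ≤ Ĉ`.
* Since `log (π_f / π₀) = f ∘ Q - V_f`, the first two facts give
  `Q̃ - Q̃^{π_f} ≤ γ P π_f (f ∘ Q - Q̃^{π_f}) ≤ γ P π_f (Ĉ + (Q̃ - Q̃^{π_f}))`,
  so `Q̃ - Q̃^{π_f}` is a subsolution of the equation for `D̂`.

Every comparison is an instance of `nonpos_of_contracting_bound`.
-/

open Finset

/-- Maximum principle: if every uniform upper bound `M` of `W` improves to `γ * M` with `γ < 1`, then
`W ≤ 0`. -/
lemma nonpos_of_contracting_bound {S A : Type*} [Fintype S] [Fintype A] [Nonempty S] [Nonempty A]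
    {γ : ℝ} (hγ1 : γ < 1) (W : S → A → ℝ)
    (h : ∀ M, (∀ s a, W s a ≤ M) → ∀ s a, W s a ≤ γ * M) : ∀ s a, W s a ≤ 0 := by
  obtain ⟨⟨s₀, a₀⟩, hmax⟩ := Finite.exists_max (fun x : S × A => W x.1 x.2)
  have hM : ∀ s a, W s a ≤ W s₀ a₀ := fun s a => hmax (s, a)
  have h0 := h _ hM s₀ a₀
  intro s a
  have := hM s a
  nlinarith

lemma average_le_average_add {ι : Type*} [Fintype ι] {w x y : ι → ℝ} {M : ℝ}
    (hw : ∀ i, 0 ≤ w i) (hw1 : ∑ i, w i = 1) (h : ∀ i, x i ≤ y i + M) :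
    ∑ i, w i * x i ≤ ∑ i, w i * y i + M := by
  calc ∑ i, w i * x i ≤ ∑ i, w i * (y i + M) :=
        Finset.sum_le_sum fun i _ => mul_le_mul_of_nonneg_left (h i) (hw i)
    _ = ∑ i, w i * y i + M := by
        simp only [mul_add, Finset.sum_add_distrib, ← Finset.sum_mul, hw1, one_mul]

lemma softV_sum_pos {A : Type*} [Fintype A] [Nonempty A] {w : A → ℝ} (hw : ∀ a, 0 < w a)
    (g : A → ℝ) : 0 < ∑ a, w a * Real.exp (g a) :=
  Finset.sum_pos (fun a _ => mul_pos (hw a) (Real.exp_pos _)) Finset.univ_nonempty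

/-- `softV` is monotone and commutes with adding constants. -/
lemma softV_le_softV_add {A : Type*} [Fintype A] [Nonempty A] {w : A → ℝ} (hw : ∀ a, 0 < w a)
    {g k : A → ℝ} {c : ℝ} (h : ∀ a, g a ≤ k a + c) : softV w g ≤ softV w k + c := by
  unfold softV
  rw [← Real.log_exp c, ← Real.log_mul (softV_sum_pos hw k).ne' (Real.exp_pos _).ne']
  apply Real.log_le_log (softV_sum_pos hw g)
  rw [Finset.sum_mul]
  refine Finset.sum_le_sum fun a _ => ?_
  rw [mul_assoc, ← Real.exp_add]
  exact mul_le_mul_of_nonneg_left (Real.exp_le_exp.2 (h a)) (hw a).le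

/-- **Regret bound for the zero-shot policy, concave conditions, entropy-regularized RL
(Lemma 5.4).** -/
theorem concave_conditions_regret_entreg_rl
    {S A : Type*} [Fintype S] [Fintype A] [Nonempty S] [Nonempty A]
    (p : S → A → S → ℝ)
    (hp_nonneg : ∀ s a s', 0 ≤ p s a s')
    (hp_sum : ∀ s a, ∑ s', p s a s' = 1)
    (γ : ℝ) (hγ0 : 0 < γ) (hγ1 : γ < 1)
    -- prior policy
    (π0 : S → A → ℝ)
    (hπ0_pos : ∀ s a, 0 < π0 s a)
    (hπ0_sum : ∀ s, ∑ a, π0 s a = 1)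
    (r : S → A → ℝ)
    -- Q is the optimal soft Q-function for reward r
    (Q : S → A → ℝ)
    (hQ : ∀ s a, Q s a = r s a + γ * ∑ s', p s a s' * softV (π0 s') (fun a' => Q s' a'))
    -- the transformation function f and its conditions
    (f : ℝ → ℝ)
    (hf_concave : ConcaveOn ℝ Set.univ f)
    (hf_superadd : ∀ x y, f x + f y ≤ f (x + y))
    (hf_superhom : ∀ x, γ * f x ≤ f (γ * x))
    (hf_lse : ∀ (𝒬 : S → A → ℝ) (s : S),
      softV (π0 s) (fun a => f (𝒬 s a)) ≤ f (softV (π0 s) (fun a => 𝒬 s a)))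
    -- Q̃ is the optimal soft Q-function for the transformed reward f ∘ r
    (Qt : S → A → ℝ)
    (hQt : ∀ s a, Qt s a = f (r s a) + γ * ∑ s', p s a s' * softV (π0 s') (fun a' => Qt s' a'))
    -- V_f and the fixed point Ĉ
    (Vf : S → ℝ)
    (hVf : ∀ s, Vf s = softV (π0 s) (fun a => f (Q s a)))
    (Ch : S → A → ℝ)
    (hCh : ∀ s a, Ch s a = f (Q s a) - f (r s a) - γ * (∑ s', p s a s' * Vf s')
      + γ * ∑ s', p s a s' * amax (fun a' => Ch s' a'))
    -- the zero-shot policy π_f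
    (πf : S → A → ℝ)
    (hπf : ∀ s a, πf s a = π0 s a * Real.exp (f (Q s a) - Vf s))
    -- Q̃^{π_f}, the soft value of π_f on the transformed task
    (Qpf : S → A → ℝ)
    (hQpf : ∀ s a, Qpf s a = f (r s a) + γ * ∑ s', p s a s' *
      ∑ a', πf s' a' * (Qpf s' a' - Real.log (πf s' a' / π0 s' a')))
    -- the fixed point D̂
    (Dh : S → A → ℝ)
    (hDh : ∀ s a, Dh s a = γ * ∑ s', p s a s' *
      ∑ a', πf s' a' * (Ch s' a' + Dh s' a')) :
    ∀ s a, Qt s a - Qpf s a ≤ Dh s a := by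
  -- The Bellman residual of `f ∘ Q` on the transformed task is nonnegative.
  have hres : ∀ s a, f (r s a) + γ * ∑ s', p s a s' * Vf s' ≤ f (Q s a) := by
    intro s a
    have jensen := hf_concave.le_map_sum (t := Finset.univ) (w := p s a)
      (p := fun s' => softV (π0 s') (fun a' => Q s' a'))
      (fun i _ => hp_nonneg s a i) (hp_sum s a) (fun _ _ => Set.mem_univ _)
    simp only [smul_eq_mul] at jensen
    have hlse : ∑ s', p s a s' * Vf s' ≤
        ∑ s', p s a s' * f (softV (π0 s') (fun a' => Q s' a')) :=
      Finset.sum_le_sum fun s' _ => mul_le_mul_of_nonneg_left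
        (by rw [hVf]; exact hf_lse Q s') (hp_nonneg s a s')
    have hmul := mul_le_mul_of_nonneg_left (hlse.trans jensen) hγ0.le
    have hhom := hf_superhom (∑ s', p s a s' * softV (π0 s') (fun a' => Q s' a'))
    have hadd := hf_superadd (r s a) (γ * ∑ s', p s a s' * softV (π0 s') (fun a' => Q s' a'))
    rw [← hQ s a] at hadd
    linarith
  have hQt_le : ∀ s a, Qt s a - f (Q s a) ≤ 0 := by
    refine nonpos_of_contracting_bound hγ1 (fun s a => Qt s a - f (Q s a)) fun M hM s a => ?_
    have hV : ∀ s', softV (π0 s') (fun a' => Qt s' a') ≤ Vf s' + M := fun s' => by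
      rw [hVf]
      exact softV_le_softV_add (hπ0_pos s') fun a' => by linarith [hM s' a']
    have := mul_le_mul_of_nonneg_left
      (average_le_average_add (hp_nonneg s a) (hp_sum s a) hV) hγ0.le
    linarith [hres s a, hQt s a]
  have hV_le : ∀ s, softV (π0 s) (fun a => Qt s a) ≤ Vf s := fun s => by
    rw [hVf, ← add_zero (softV _ fun a => f (Q s a))]
    exact softV_le_softV_add (hπ0_pos s) fun a => by linarith [hQt_le s a]
  have hgap : ∀ s a, f (Q s a) - Qt s a - Ch s a ≤ 0 := by
    refine nonpos_of_contracting_bound hγ1 (fun s a => f (Q s a) - Qt s a - Ch s a)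
      fun M hM s a => ?_
    have hV : ∀ s', Vf s' ≤
        (softV (π0 s') (fun a' => Qt s' a') + amax (fun a' => Ch s' a')) + M := fun s' => by
      rw [hVf, add_assoc]
      refine softV_le_softV_add (hπ0_pos s') fun a' => ?_
      have hC : Ch s' a' ≤ amax (fun a' => Ch s' a') :=
        Finset.le_sup' (fun a' => Ch s' a') (Finset.mem_univ a')
      linarith [hM s' a']
    have := mul_le_mul_of_nonneg_left
      (average_le_average_add (hp_nonneg s a) (hp_sum s a) hV) hγ0.le
    simp only [mul_add, Finset.sum_add_distrib] at this
    linarith [hCh s a, hQt s a]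
  have hπf_nonneg : ∀ s a, 0 ≤ πf s a := fun s a => by
    rw [hπf]
    exact (mul_pos (hπ0_pos s a) (Real.exp_pos _)).le
  have hπf_sum : ∀ s, ∑ a, πf s a = 1 := fun s => by
    have hpos := softV_sum_pos (hπ0_pos s) (fun a => f (Q s a))
    simp only [hπf, hVf, softV, Real.exp_sub, Real.exp_log hpos]
    simp only [← mul_div_assoc, ← Finset.sum_div]
    exact div_self hpos.ne'
  have hlog : ∀ s a, Real.log (πf s a / π0 s a) = f (Q s a) - Vf s := fun s a => by
    rw [hπf, mul_div_cancel_left₀ _ (hπ0_pos s a).ne', Real.log_exp]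
  have hmain : ∀ s a, Qt s a - Qpf s a - Dh s a ≤ 0 := by
    refine nonpos_of_contracting_bound hγ1 (fun s a => Qt s a - Qpf s a - Dh s a)
      fun M hM s a => ?_
    have hV : ∀ s', softV (π0 s') (fun a' => Qt s' a') ≤
        (∑ a', πf s' a' * (Qpf s' a' - Real.log (πf s' a' / π0 s' a'))
          + ∑ a', πf s' a' * (Ch s' a' + Dh s' a')) + M := fun s' => by
      refine (hV_le s').trans ?_
      have hconst : ∑ a', πf s' a' * Vf s' = Vf s' := by
        rw [← Finset.sum_mul, hπf_sum, one_mul]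
      rw [← hconst, ← Finset.sum_add_distrib]
      simp only [← mul_add]
      refine average_le_average_add (hπf_nonneg s') (hπf_sum s') fun a' => ?_
      rw [hlog]
      linarith [hM s' a', hgap s' a']
    have := mul_le_mul_of_nonneg_left
      (average_le_average_add (hp_nonneg s a) (hp_sum s a) hV) hγ0.le
    rw [mul_add] at this
    simp only [mul_add (p s a _), Finset.sum_add_distrib] at this
    rw [mul_add] at this
    linarith [hQt s a, hQpf s a, hDh s a]
  intro s a
  linarith [hmain s a]
end

section
/- Let Q be the optimal Q-function for reward r, and let f : ℝ → ℝ satisfy: (1) f is convex; (2i) f(x+y) ≤ f(x) + f(y) for all x, y; (2ii) f(γx) ≤ γ·f(x) for all x. Define V_f(s) = max_{a∈A} f(Q(s,a)). Then the auxiliary reward r_C(s,a) = f(r(s,a)) + γ·∑_{s'} p(s'|s,a)·V_f(s') − f(Q(s,a)) is nonnegative for all (s,a). -/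
/-!
Write `Q = r + γ E[max Q]` by the Bellman equation. Subadditivity and `f (γ x) ≤ γ f x` give
`f Q ≤ f r + γ f (E[max Q])`; Jensen's inequality moves `f` inside the expectation, and
`f (max Q) ≤ max (f ∘ Q) = V_f` because the maximum over the finite action set is attained.
-/

open Finset

/-- **Nonnegativity of the auxiliary reward `r_C` under the convex conditions, standard RL.** -/
theorem rC_nonneg_standard_rl
    {S A : Type*} [Fintype S] [Fintype A] [Nonempty S] [Nonempty A]
    (p : S → A → S → ℝ)
    (hp_nonneg : ∀ s a s', 0 ≤ p s a s')
    (hp_sum : ∀ s a, ∑ s', p s a s' = 1)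
    (γ : ℝ) (hγ0 : 0 < γ) (hγ1 : γ < 1)
    (r : S → A → ℝ)
    -- Q is the optimal Q-function for reward r
    (Q : S → A → ℝ)
    (hQ : ∀ s a, Q s a = r s a + γ * ∑ s', p s a s' * amax (fun a' => Q s' a'))
    -- the transformation function f and its conditions
    (f : ℝ → ℝ)
    (hf_convex : ConvexOn ℝ Set.univ f)
    (hf_subadd : ∀ x y, f (x + y) ≤ f x + f y)
    (hf_subhom : ∀ x, f (γ * x) ≤ γ * f x)
    -- V_f and the auxiliary reward r_C
    (Vf : S → ℝ)
    (hVf : ∀ s, Vf s = amax (fun a => f (Q s a)))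
    (rC : S → A → ℝ)
    (hrC : ∀ s a, rC s a = f (r s a) + γ * (∑ s', p s a s' * Vf s') - f (Q s a)) :
    ∀ s a, 0 ≤ rC s a := by
  intro s a
  -- the maximum of Q is attained, so f (max Q) is one of the values maximized in Vf
  have hmax : ∀ s', f (amax (fun a' => Q s' a')) ≤ Vf s' := by
    intro s'
    obtain ⟨b, -, hb⟩ := Finset.exists_mem_eq_sup' Finset.univ_nonempty (fun a' => Q s' a')
    rw [hVf, amax, amax, hb]
    exact Finset.le_sup' (fun a => f (Q s' a)) (Finset.mem_univ b)
  have hjensen : f (∑ s', p s a s' * amax (fun a' => Q s' a'))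
      ≤ ∑ s', p s a s' * f (amax (fun a' => Q s' a')) := by
    simpa only [smul_eq_mul] using hf_convex.map_sum_le (t := Finset.univ) (w := p s a)
      (p := fun s' => amax (fun a' => Q s' a'))
      (fun s' _ => hp_nonneg s a s') (hp_sum s a) (fun _ _ => Set.mem_univ _)
  have hmono : ∑ s', p s a s' * f (amax (fun a' => Q s' a')) ≤ ∑ s', p s a s' * Vf s' :=
    Finset.sum_le_sum fun s' _ => mul_le_mul_of_nonneg_left (hmax s') (hp_nonneg s a s')
  have hscale := mul_le_mul_of_nonneg_left (hjensen.trans hmono) hγ0.le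
  have hadd := hf_subadd (r s a) (γ * ∑ s', p s a s' * amax (fun a' => Q s' a'))
  have hhom := hf_subhom (∑ s', p s a s' * amax (fun a' => Q s' a'))
  rw [← hQ s a] at hadd
  rw [hrC]
  linarith
end

section
/- For k = 1, …, M, let Q^(k) be the optimal Q-function for reward r^(k), and let α₁, …, α_M ≥ 0 be nonnegative weights. If Q̃ is the optimal Q-function for the conically combined reward (s,a) ↦ ∑_{k=1}^M α_k·r^(k)(s,a), then for all (s,a): Q̃(s,a) ≤ ∑_{k=1}^M α_k·Q^(k)(s,a). -/
/-!
Let `d` be the largest value of the gap `Qt - ∑ k, α k * Q k` over state-action pairs. Since the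
weights are nonnegative, the maximum over actions is subadditive along the conical combination, so
`amax (Qt s) ≤ ∑ k, α k * amax (Q k s) + d` at every state `s`. The rewards cancel when the Bellman
equations at a maximizing pair are subtracted, and averaging this bound against the probability
vector `p s a` gives `d ≤ γ * d`. As `γ < 1`, this forces `d ≤ 0`.
-/

open Finset

/-- **Conical combination of rewards, standard RL.** -/
theorem conical_combination_standard_rl
    {S A : Type*} [Fintype S] [Fintype A] [Nonempty S] [Nonempty A]
    (p : S → A → S → ℝ)
    (hp_nonneg : ∀ s a s', 0 ≤ p s a s')
    (hp_sum : ∀ s a, ∑ s', p s a s' = 1)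
    (γ : ℝ) (hγ0 : 0 < γ) (hγ1 : γ < 1)
    (M : ℕ)
    (r : Fin M → S → A → ℝ)
    -- Q k is the optimal Q-function for reward r k
    (Q : Fin M → S → A → ℝ)
    (hQ : ∀ k s a, Q k s a = r k s a + γ * ∑ s', p s a s' * amax (fun a' => Q k s' a'))
    -- nonnegative weights
    (α : Fin M → ℝ)
    (hα : ∀ k, 0 ≤ α k)
    -- Q̃ is the optimal Q-function for the conically combined reward
    (Qt : S → A → ℝ)
    (hQt : ∀ s a, Qt s a = (∑ k, α k * r k s a)
      + γ * ∑ s', p s a s' * amax (fun a' => Qt s' a')) :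
    ∀ s a, Qt s a ≤ ∑ k, α k * Q k s a := by
  -- `(s₀, a₀)` maximizes the gap `Qt - ∑ k, α k * Q k` over the finite set `S × A`.
  obtain ⟨⟨s₀, a₀⟩, hmax⟩ :=
    Finite.exists_max (fun x : S × A => Qt x.1 x.2 - ∑ k, α k * Q k x.1 x.2)
  set d := Qt s₀ a₀ - ∑ k, α k * Q k s₀ a₀ with hd
  have hgap : ∀ s a, Qt s a - ∑ k, α k * Q k s a ≤ d := fun s a => hmax (s, a)
  have hamax : ∀ s, amax (fun a => Qt s a) ≤ ∑ k, α k * amax (fun a => Q k s a) + d := by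
    intro s
    refine Finset.sup'_le _ _ fun a _ => ?_
    have hle : ∑ k, α k * Q k s a ≤ ∑ k, α k * amax (fun a => Q k s a) :=
      Finset.sum_le_sum fun k _ => mul_le_mul_of_nonneg_left
        (Finset.le_sup' (fun a => Q k s a) (Finset.mem_univ a)) (hα k)
    linarith [hgap s a]
  have hcomb : ∑ k, α k * Q k s₀ a₀ = ∑ k, α k * r k s₀ a₀
      + γ * ∑ s', p s₀ a₀ s' * ∑ k, α k * amax (fun a => Q k s' a) := by
    calc ∑ k, α k * Q k s₀ a₀
        = ∑ k, (α k * r k s₀ a₀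
            + γ * ∑ s', p s₀ a₀ s' * (α k * amax (fun a => Q k s' a))) := by
          refine Finset.sum_congr rfl fun k _ => ?_
          rw [hQ k s₀ a₀, mul_add, mul_left_comm, Finset.mul_sum]
          simp only [mul_left_comm]
      _ = _ := by
          rw [Finset.sum_add_distrib, ← Finset.mul_sum, Finset.sum_comm]
          simp only [Finset.mul_sum]
  have hexp : ∑ s', p s₀ a₀ s' * amax (fun a => Qt s' a)
      ≤ ∑ s', p s₀ a₀ s' * ∑ k, α k * amax (fun a => Q k s' a) + d := by
    calc ∑ s', p s₀ a₀ s' * amax (fun a => Qt s' a)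
        ≤ ∑ s', p s₀ a₀ s' * (∑ k, α k * amax (fun a => Q k s' a) + d) :=
          Finset.sum_le_sum fun s' _ =>
            mul_le_mul_of_nonneg_left (hamax s') (hp_nonneg s₀ a₀ s')
      _ = _ := by
          simp only [mul_add, Finset.sum_add_distrib]
          rw [← Finset.sum_mul, hp_sum, one_mul]
  have hcontr : d ≤ γ * d := by
    have h := mul_le_mul_of_nonneg_left hexp hγ0.le
    rw [mul_add] at h
    linarith [hQt s₀ a₀]
  have hd0 : d ≤ 0 := by nlinarith
  intro s a
  linarith [hgap s a]
end

section
/- For k = 1, …, M (with M ≥ 1), let Q^(k) be the optimal Q-function for reward r^(k). If Q̃ is the optimal Q-function for the AND-composite reward (s,a) ↦ min_{1≤k≤M} r^(k)(s,a), then for all (s,a): Q̃(s,a) ≤ min_{1≤k≤M} Q^(k)(s,a). -/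
/-!
The Bellman optimality operator is monotone in the reward and shifts constants by the factor `γ`.
Fix `k` and let `D` be the maximum of `Qt - Q k` over the finite set `S × A`. Then
`max Qt ≤ max (Q k) + D` at every state, so subtracting the two Bellman equations at a maximizer,
where `min_j r j ≤ r k`, gives `D ≤ γ * D`. Since `γ < 1`, this forces `D ≤ 0`.
-/

open Finset

/-- Minimum of a real-valued function over a nonempty finite (index or action) set. -/
noncomputable def amin {A : Type*} [Fintype A] [Nonempty A] (g : A → ℝ) : ℝ :=
  Finset.univ.inf' Finset.univ_nonempty g

/-- **AND composition, standard RL:** the optimal Q-function of the min-composite reward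
is dominated by the min of the primitive optimal Q-functions. -/
theorem and_composition_standard_rl
    {S A : Type*} [Fintype S] [Fintype A] [Nonempty S] [Nonempty A]
    (p : S → A → S → ℝ)
    (hp_nonneg : ∀ s a s', 0 ≤ p s a s')
    (hp_sum : ∀ s a, ∑ s', p s a s' = 1)
    (γ : ℝ) (hγ0 : 0 < γ) (hγ1 : γ < 1)
    (M : ℕ) [NeZero M]
    (r : Fin M → S → A → ℝ)
    -- Q k is the optimal Q-function for reward r k
    (Q : Fin M → S → A → ℝ)
    (hQ : ∀ k s a, Q k s a = r k s a + γ * ∑ s', p s a s' * amax (fun a' => Q k s' a'))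
    -- Q̃ is the optimal Q-function for the AND-composite reward
    (Qt : S → A → ℝ)
    (hQt : ∀ s a, Qt s a = amin (fun k => r k s a)
      + γ * ∑ s', p s a s' * amax (fun a' => Qt s' a')) :
    ∀ s a, Qt s a ≤ amin (fun k => Q k s a) := by
  intro s a
  refine Finset.le_inf' _ _ fun k _ => ?_
  obtain ⟨⟨s₀, a₀⟩, hmax⟩ := Finite.exists_max (fun x : S × A => Qt x.1 x.2 - Q k x.1 x.2)
  set D := Qt s₀ a₀ - Q k s₀ a₀ with hD
  have hle : ∀ s a, Qt s a - Q k s a ≤ D := fun s a => hmax (s, a)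
  have hamax : ∀ s', amax (fun a' => Qt s' a') ≤ amax (fun a' => Q k s' a') + D := by
    intro s'
    refine Finset.sup'_le _ _ fun a' _ => ?_
    have h : Q k s' a' ≤ amax (fun a' => Q k s' a') :=
      Finset.le_sup' (fun a' => Q k s' a') (Finset.mem_univ a')
    linarith [hle s' a']
  have hsum : ∑ s', p s₀ a₀ s' * amax (fun a' => Qt s' a')
      ≤ ∑ s', p s₀ a₀ s' * amax (fun a' => Q k s' a') + D := by
    calc ∑ s', p s₀ a₀ s' * amax (fun a' => Qt s' a')
        ≤ ∑ s', p s₀ a₀ s' * (amax (fun a' => Q k s' a') + D) :=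
          Finset.sum_le_sum fun s' _ =>
            mul_le_mul_of_nonneg_left (hamax s') (hp_nonneg s₀ a₀ s')
      _ = ∑ s', p s₀ a₀ s' * amax (fun a' => Q k s' a') + D := by
          simp only [mul_add, Finset.sum_add_distrib]
          rw [← Finset.sum_mul, hp_sum, one_mul]
  have hr : amin (fun j => r j s₀ a₀) ≤ r k s₀ a₀ :=
    Finset.inf'_le (fun j => r j s₀ a₀) (Finset.mem_univ k)
  have hcontr : D ≤ γ * D := by
    have h := mul_le_mul_of_nonneg_left hsum hγ0.le
    rw [mul_add] at h
    linarith [hQ k s₀ a₀, hQt s₀ a₀]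
  have hD0 : D ≤ 0 := by nlinarith
  linarith [hle s a]
end

section
/- Let Q be the optimal Q-function for reward r. If Q̃ is the optimal Q-function for the negated reward (s,a) ↦ −r(s,a) (the NOT gate), then for all (s,a): Q̃(s,a) ≥ −Q(s,a). -/
/-!
The rewards cancel in the sum `D = Q + Qt`, so `D s a` is `γ` times the expectation of
`amax (Q s') + amax (Qt s')`. Each such term is at least `D s' a'` for any action `a'`, hence at
least the minimum `m` of `D`. At a minimiser this reads `m ≥ γ * m`, and `γ < 1` forces `m ≥ 0`.
-/

open Finset

/-- **NOT gate, standard RL:** the optimal Q-function for the negated reward dominates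
the negated primitive optimal Q-function. -/
theorem not_gate_standard_rl
    {S A : Type*} [Fintype S] [Fintype A] [Nonempty S] [Nonempty A]
    (p : S → A → S → ℝ)
    (hp_nonneg : ∀ s a s', 0 ≤ p s a s')
    (hp_sum : ∀ s a, ∑ s', p s a s' = 1)
    (γ : ℝ) (hγ0 : 0 < γ) (hγ1 : γ < 1)
    (r : S → A → ℝ)
    -- Q is the optimal Q-function for reward r
    (Q : S → A → ℝ)
    (hQ : ∀ s a, Q s a = r s a + γ * ∑ s', p s a s' * amax (fun a' => Q s' a'))
    -- Q̃ is the optimal Q-function for the negated reward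
    (Qt : S → A → ℝ)
    (hQt : ∀ s a, Qt s a = -r s a + γ * ∑ s', p s a s' * amax (fun a' => Qt s' a')) :
    ∀ s a, -Q s a ≤ Qt s a := by
  -- The pair minimising the sum of the two Q-functions.
  obtain ⟨⟨s₀, a₀⟩, hmin⟩ := Finite.exists_min (fun x : S × A => Q x.1 x.2 + Qt x.1 x.2)
  have le_amax (g : A → ℝ) (a : A) : g a ≤ amax g := Finset.le_sup' g (Finset.mem_univ a)
  have hstate (s' : S) : Q s₀ a₀ + Qt s₀ a₀ ≤
      amax (fun a' => Q s' a') + amax (fun a' => Qt s' a') := by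
    obtain ⟨a⟩ := ‹Nonempty A›
    have h₁ := hmin (s', a)
    have h₂ := le_amax (fun a' => Q s' a') a
    have h₃ := le_amax (fun a' => Qt s' a') a
    dsimp only at h₁ h₂ h₃
    linarith
  have hsum : Q s₀ a₀ + Qt s₀ a₀ ≤ ∑ s', p s₀ a₀ s' * amax (fun a' => Q s' a') +
      ∑ s', p s₀ a₀ s' * amax (fun a' => Qt s' a') := by
    calc Q s₀ a₀ + Qt s₀ a₀ = ∑ s', p s₀ a₀ s' * (Q s₀ a₀ + Qt s₀ a₀) := by
          rw [← Finset.sum_mul, hp_sum, one_mul]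
      _ ≤ ∑ s', p s₀ a₀ s' * (amax (fun a' => Q s' a') + amax (fun a' => Qt s' a')) :=
          Finset.sum_le_sum fun s' _ => mul_le_mul_of_nonneg_left (hstate s') (hp_nonneg _ _ _)
      _ = _ := by simp only [mul_add, Finset.sum_add_distrib]
  -- With `m` the minimum, the Bellman equations at the minimiser give `γ * m ≤ m`.
  have hm : 0 ≤ Q s₀ a₀ + Qt s₀ a₀ := by
    have h₁ := mul_le_mul_of_nonneg_left hsum hγ0.le
    have h₂ := hQ s₀ a₀
    have h₃ := hQt s₀ a₀
    have h₄ : γ * (Q s₀ a₀ + Qt s₀ a₀) ≤ Q s₀ a₀ + Qt s₀ a₀ := by linarith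
    by_contra! hneg
    nlinarith
  intro s a
  have h := hmin (s, a)
  dsimp only at h
  linarith
end

section
/- For k = 1, …, M, let Q^(k) be the optimal soft Q-function for reward r^(k), and let α₁, …, α_M ≥ 0 with ∑_{k=1}^M α_k = 1 be convex weights. If Q̃ is the optimal soft Q-function for the convexly combined reward (s,a) ↦ ∑_{k=1}^M α_k·r^(k)(s,a), then for all (s,a): Q̃(s,a) ≤ ∑_{k=1}^M α_k·Q^(k)(s,a). -/
/-!
The soft value `softV` is convex, monotone, and commutes with adding constants. Hence
`D = max (Qt - ∑ k, α k * Q k)` contracts under one Bellman step: at a maximizing pair, subtracting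
the averaged Bellman equations of the `Q k` from that of `Qt` leaves
`γ` times a `p`-average of differences of soft values, each at most `D` by
`softV_le_sum_add`. So `D ≤ γ * D`, which forces `D ≤ 0`.
-/

open Finset

theorem exp_softV {A : Type*} [Fintype A] [Nonempty A] (w g : A → ℝ) (hw : ∀ a, 0 < w a) :
    Real.exp (softV w g) = ∑ a, w a * Real.exp (g a) :=
  Real.exp_log (Finset.sum_pos (fun a _ => mul_pos (hw a) (Real.exp_pos _))
    Finset.univ_nonempty)

/-- Convexity, monotonicity and translation equivariance of `softV` in one inequality. It follows
from Jensen's inequality for `exp` applied to the normalized values `f k a - softV w (f k)`, for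
which `∑ a, w a * exp (f k a - softV w (f k)) = 1`. -/
theorem softV_le_sum_add {A ι : Type*} [Fintype A] [Nonempty A] [Fintype ι]
    (w : A → ℝ) (hw : ∀ a, 0 < w a) (α : ι → ℝ) (hα : ∀ k, 0 ≤ α k) (hα1 : ∑ k, α k = 1)
    (f : ι → A → ℝ) (g : A → ℝ) (c : ℝ) (hg : ∀ a, g a ≤ ∑ k, α k * f k a + c) :
    softV w g ≤ ∑ k, α k * softV w (f k) + c := by
  set B := ∑ k, α k * softV w (f k) + c with hB
  have hnorm : ∀ k, ∑ a, w a * Real.exp (f k a - softV w (f k)) = 1 := by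
    intro k
    simp_rw [Real.exp_sub, ← mul_div_assoc]
    rw [← Finset.sum_div, ← exp_softV w (f k) hw, div_self (Real.exp_ne_zero _)]
  have hpt : ∀ a, Real.exp (g a - B) ≤ ∑ k, α k * Real.exp (f k a - softV w (f k)) := by
    intro a
    have hJ := convexOn_exp.map_sum_le (t := Finset.univ) (w := α)
      (p := fun k => f k a - softV w (f k)) (fun k _ => hα k) hα1 (fun _ _ => Set.mem_univ _)
    simp only [smul_eq_mul] at hJ
    refine le_trans (Real.exp_le_exp.mpr ?_) hJ
    simp_rw [mul_sub, Finset.sum_sub_distrib]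
    linarith [hg a]
  have hsum : ∑ a, w a * Real.exp (g a - B) ≤ 1 := by
    calc ∑ a, w a * Real.exp (g a - B)
        ≤ ∑ a, w a * ∑ k, α k * Real.exp (f k a - softV w (f k)) :=
          Finset.sum_le_sum fun a _ => mul_le_mul_of_nonneg_left (hpt a) (hw a).le
      _ = ∑ k, α k * ∑ a, w a * Real.exp (f k a - softV w (f k)) := by
          simp_rw [Finset.mul_sum]
          rw [Finset.sum_comm]
          exact Finset.sum_congr rfl fun k _ => Finset.sum_congr rfl fun a _ => by ring
      _ = 1 := by simp_rw [hnorm, mul_one, hα1]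
  simp_rw [Real.exp_sub, ← mul_div_assoc] at hsum
  rw [← Finset.sum_div, ← exp_softV w g hw, div_le_one (Real.exp_pos _)] at hsum
  exact Real.exp_le_exp.mp hsum

/-- **Convex combination of rewards, entropy-regularized RL.** -/
theorem convex_combination_entreg_rl
    {S A : Type*} [Fintype S] [Fintype A] [Nonempty S] [Nonempty A]
    (p : S → A → S → ℝ)
    (hp_nonneg : ∀ s a s', 0 ≤ p s a s')
    (hp_sum : ∀ s a, ∑ s', p s a s' = 1)
    (γ : ℝ) (hγ0 : 0 < γ) (hγ1 : γ < 1)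
    -- prior policy
    (π0 : S → A → ℝ)
    (hπ0_pos : ∀ s a, 0 < π0 s a)
    (hπ0_sum : ∀ s, ∑ a, π0 s a = 1)
    (M : ℕ)
    (r : Fin M → S → A → ℝ)
    -- Q k is the optimal soft Q-function for reward r k
    (Q : Fin M → S → A → ℝ)
    (hQ : ∀ k s a, Q k s a = r k s a
      + γ * ∑ s', p s a s' * softV (π0 s') (fun a' => Q k s' a'))
    -- convex weights
    (α : Fin M → ℝ)
    (hα_nonneg : ∀ k, 0 ≤ α k)
    (hα_sum : ∑ k, α k = 1)
    -- Q̃ is the optimal soft Q-function for the convexly combined reward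
    (Qt : S → A → ℝ)
    (hQt : ∀ s a, Qt s a = (∑ k, α k * r k s a)
      + γ * ∑ s', p s a s' * softV (π0 s') (fun a' => Qt s' a')) :
    ∀ s a, Qt s a ≤ ∑ k, α k * Q k s a := by
  obtain ⟨⟨s₀, a₀⟩, hmax⟩ :=
    Finite.exists_max (fun x : S × A => Qt x.1 x.2 - ∑ k, α k * Q k x.1 x.2)
  set D := Qt s₀ a₀ - ∑ k, α k * Q k s₀ a₀ with hD
  have hle : ∀ s a, Qt s a ≤ ∑ k, α k * Q k s a + D := fun s a => by
    have := hmax (s, a)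
    simp only at this
    linarith
  have hV : ∀ s, softV (π0 s) (fun a => Qt s a)
      ≤ ∑ k, α k * softV (π0 s) (fun a => Q k s a) + D := fun s =>
    softV_le_sum_add (π0 s) (hπ0_pos s) α hα_nonneg hα_sum (fun k a => Q k s a) _ D (hle s)
  have hstep : ∑ s', p s₀ a₀ s' * softV (π0 s') (fun a' => Qt s' a')
      ≤ ∑ s', p s₀ a₀ s' * ∑ k, α k * softV (π0 s') (fun a' => Q k s' a') + D := by
    calc _ ≤ ∑ s', p s₀ a₀ s' * (∑ k, α k * softV (π0 s') (fun a' => Q k s' a') + D) :=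
          Finset.sum_le_sum fun s' _ => mul_le_mul_of_nonneg_left (hV s') (hp_nonneg _ _ _)
      _ = _ := by
          simp_rw [mul_add, Finset.sum_add_distrib]
          rw [← Finset.sum_mul, hp_sum, one_mul]
  have hQavg : ∑ k, α k * Q k s₀ a₀ = ∑ k, α k * r k s₀ a₀
      + γ * ∑ s', p s₀ a₀ s' * ∑ k, α k * softV (π0 s') (fun a' => Q k s' a') := by
    rw [Finset.sum_congr rfl fun k _ => congrArg (α k * ·) (hQ k s₀ a₀)]
    simp_rw [mul_add, Finset.sum_add_distrib, Finset.mul_sum]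
    congr 1
    rw [Finset.sum_comm]
    exact Finset.sum_congr rfl fun s' _ => Finset.sum_congr rfl fun k _ => by ring
  have hcontr : D ≤ γ * D := by
    have h := mul_le_mul_of_nonneg_left hstep hγ0.le
    rw [mul_add] at h
    linarith [hQt s₀ a₀]
  have hD0 : D ≤ 0 := by nlinarith
  intro s a
  linarith [hle s a]
end
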